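/- For every integer n ≥ 2, n² · √3 · arctan( √3/(2n − 1) ) = (3/2) · ∑_{k=0}^∞ (1/(−n³)^k) · ( n/(3k+1) + 1/(3k+2) ). -/

import Mathlib

theorem stmt_5 (n : ℕ) (hn : 2 ≤ n) :
    (n : ℝ) ^ 2 * Real.sqrt 3 * Real.arctan (Real.sqrt 3 / (2 * (n : ℝ) - 1)) =
      (3 / 2) * ∑' k : ℕ, (1 / (-(n : ℝ) ^ 3) ^ k) *
        ((n : ℝ) / (3 * (k : ℝ) + 1) + 1 / (3 * (k : ℝ) + 2)) := by
  have hn' : (2 : ℝ) ≤ n := by exact_mod_cast hn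
  have hn0 : (n : ℝ) ≠ 0 := by positivity
  have h3 : Real.sqrt 3 ^ 2 = 3 := Real.sq_sqrt (by norm_num)
  obtain ⟨z, hz⟩ : ∃ z : ℂ, z = ⟨1 / (2 * n), Real.sqrt 3 / (2 * n)⟩ := ⟨_, rfl⟩
  have hre : z.re = 1 / (2 * n) := by rw [hz]
  have him : z.im = Real.sqrt 3 / (2 * n) := by rw [hz]
  have hz2re : (z ^ 2).re = -1 / (2 * n ^ 2) := by
    rw [pow_two, Complex.mul_re, hre, him]
    field_simp
    linarith
  have hz2im : (z ^ 2).im = Real.sqrt 3 / (2 * n ^ 2) := by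
    rw [pow_two, Complex.mul_im, hre, him]
    field_simp
    norm_num
  have hz3 : z ^ 3 = ((-(1 / (n : ℝ) ^ 3) : ℝ) : ℂ) := by
    rw [pow_succ]
    apply Complex.ext
    · rw [Complex.mul_re, hz2re, hz2im, hre, him, Complex.ofReal_re]
      field_simp
      linarith
    · rw [Complex.mul_im, hz2re, hz2im, hre, him, Complex.ofReal_im]
      field_simp
      norm_num
  have hnorm : ‖z‖ < 1 := by
    have h : ‖z‖ ^ 2 < 1 := by
      rw [Complex.sq_norm, Complex.normSq_apply, hre, him]
      have : 1 / (2 * (n : ℝ)) * (1 / (2 * n)) + Real.sqrt 3 / (2 * n) * (Real.sqrt 3 / (2 * n))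
          = 1 / (n : ℝ) ^ 2 := by
        field_simp
        linarith
      rw [this, div_lt_one (by positivity)]
      nlinarith
    nlinarith [norm_nonneg z]
  have hs := Complex.hasSum_im (Complex.hasSum_taylorSeries_neg_log hnorm)
  have hlog : (-Complex.log (1 - z)).im = Real.arctan (Real.sqrt 3 / (2 * (n : ℝ) - 1)) := by
    have hpos : 0 < (1 - z).re := by
      rw [Complex.sub_re, hre, Complex.one_re, sub_pos, div_lt_one (by positivity)]
      linarith
    have ha := abs_lt.1 (Complex.abs_arg_lt_pi_div_two_iff.2 (Or.inl hpos))
    rw [Complex.neg_im, Complex.log_im, ← Real.arctan_tan ha.1 ha.2, Complex.tan_arg,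
      ← Real.arctan_neg]
    congr 1
    rw [Complex.sub_re, Complex.sub_im, hre, him, Complex.one_re, Complex.one_im]
    have : 2 * (n : ℝ) - 1 ≠ 0 := by linarith
    have h4 : 1 - 1 / (2 * (n : ℝ)) = (2 * n - 1) / (2 * n) := by field_simp
    rw [h4]
    field_simp
    ring
  rw [hlog] at hs
  have hsum := hs.summable
  have e := Nat.sumByResidueClasses hsum 3
  rw [hs.tsum_eq] at e
  have e3 : ∀ F : ZMod 3 → ℝ, ∑ j : ZMod 3, F j = F 0 + F 1 + F 2 := fun F => Fin.sum_univ_three F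
  rw [e3] at e
  have v0 : (0 : ZMod 3).val = 0 := rfl
  have v1 : (1 : ZMod 3).val = 1 := rfl
  have v2 : (2 : ZMod 3).val = 2 := rfl
  rw [v0, v1, v2] at e
  have inj : ∀ j : ℕ, Function.Injective (fun m : ℕ => j + 3 * m) := fun j a b h => by
    simp only at h; omega
  have s1 := hsum.comp_injective (inj 1)
  have s2 := hsum.comp_injective (inj 2)
  simp only [Function.comp_def] at s1 s2
  have key : ∀ j m : ℕ, (z ^ (j + 3 * m) / ((j + 3 * m : ℕ) : ℂ)).im
      = (z ^ j).im * (-(1 / (n : ℝ) ^ 3)) ^ m / (j + 3 * m) := by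
    intro j m
    rw [Complex.div_natCast_im, pow_add, pow_mul, hz3, ← Complex.ofReal_pow,
      Complex.im_mul_ofReal]
    push_cast
    rfl
  have t0 : ∑' m : ℕ, (z ^ (0 + 3 * m) / ((0 + 3 * m : ℕ) : ℂ)).im = 0 := by
    simp only [key]
    simp
  rw [t0, zero_add, ← s1.tsum_add s2] at e
  rw [e, ← tsum_mul_left, ← tsum_mul_left]
  refine tsum_congr fun m => ?_
  rw [key, key, hz2im, pow_one, him]
  have h5 : (-(1 / (n : ℝ) ^ 3)) ^ m = 1 / (-(n : ℝ) ^ 3) ^ m := by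
    rw [← one_div_neg_eq_neg_one_div, one_div_pow]
  rw [h5]
  generalize 1 / (-(n : ℝ) ^ 3) ^ m = q
  have a1 : (1 : ℝ) + 3 * m ≠ 0 := by positivity
  have a2 : (2 : ℝ) + 3 * m ≠ 0 := by positivity
  rw [add_comm (3 * (m : ℝ)) 1, add_comm (3 * (m : ℝ)) 2]
  push_cast
  field_simp
  rw [h3, mul_comm]
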